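/- For every integer n ≥ 1, the number of Dyck bridges of semi-length n whose first step is an up step and in which every peak other than the first peak has height strictly less than the height of the first peak equals the Catalan number C(2n,n)/(n+1). -/

import Mathlib

/-- The step associated to a letter: `true` is an up step `+1`, `false` a down step `-1`. -/
def stepVal (b : Bool) : ℤ := if b then 1 else -1

/-- Partial sum `S_i`: the sum of the first `i` steps of the word `w`. -/
def psum {L : ℕ} (w : Fin L → Bool) (i : ℕ) : ℤ :=
  ∑ j : Fin L, if (j : ℕ) < i then stepVal (w j) else 0

/-- A Dyck bridge: a `±1` word whose total sum is `0`. -/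
def IsBridge {L : ℕ} (w : Fin L → Bool) : Prop := psum w L = 0

/-- A Dyck path: a bridge all of whose partial sums are nonnegative. -/
def IsDyck {L : ℕ} (w : Fin L → Bool) : Prop :=
  IsBridge w ∧ ∀ i : ℕ, 0 ≤ psum w i

/-- A peak at (0-based) position `i`: step `i` is up and step `i+1` is down. -/
def IsPeak {L : ℕ} (w : Fin L → Bool) (i : ℕ) : Prop :=
  ∃ j k : Fin L, (j : ℕ) = i ∧ (k : ℕ) = i + 1 ∧ w j = true ∧ w k = false

/-- The height of the peak at (0-based) position `i`, i.e. the altitude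
reached by its up step. -/
def peakHeight {L : ℕ} (w : Fin L → Bool) (i : ℕ) : ℤ := psum w (i + 1)

/-- A crossing of the x-axis at (1-based) index `i`: `0 < i < L`, `S_i = 0`,
and the steps `w_i`, `w_{i+1}` (1-based) are equal. -/
def IsCrossing {L : ℕ} (w : Fin L → Bool) (i : ℕ) : Prop :=
  0 < i ∧ i < L ∧ psum w i = 0 ∧
    ∃ j k : Fin L, (j : ℕ) + 1 = i ∧ (k : ℕ) = i ∧ w j = w k

namespace S19

def s (l : List Bool) : ℤ := (l.map stepVal).sum

lemma s_append (a b : List Bool) : s (a ++ b) = s a + s b := by simp [s]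
lemma s_cons (a : Bool) (b : List Bool) : s (a :: b) = stepVal a + s b := by simp [s]
lemma s_nil : s [] = 0 := rfl
lemma s_reverse (a : List Bool) : s a.reverse = s a := by simp [s]
lemma s_rep (k : ℕ) : s (List.replicate k true) = k := by simp [s, stepVal]

lemma s_take_succ (l : List Bool) (i : ℕ) (b : Bool) (h : l[i]? = some b) :
    s (l.take (i+1)) = s (l.take i) + stepVal b := by
  rw [List.take_add_one, s_append, h]; simp [s]

lemma psum_eq {L : ℕ} (w : Fin L → Bool) (i : ℕ) : psum w i = s ((List.ofFn w).take i) := by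
  induction i with
  | zero => simp [psum, s]
  | succ i ih =>
    by_cases h : i < L
    · rw [s_take_succ _ i (w ⟨i, h⟩) (by simp [h]), ← ih]
      unfold psum
      have : stepVal (w ⟨i, h⟩) = ∑ j : Fin L, if j = ⟨i, h⟩ then stepVal (w j) else 0 := by simp
      rw [this, ← Finset.sum_add_distrib]
      apply Finset.sum_congr rfl
      intro j _
      by_cases h1 : (j : ℕ) < i
      · have : j ≠ ⟨i, h⟩ := by intro h2; simp [h2] at h1
        simp [h1, this, Nat.lt_succ_of_lt h1]
      · by_cases h2 : j = ⟨i, h⟩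
        · simp [h2]
        · have : ¬ (j : ℕ) < i + 1 := by
            intro h3; apply h2; ext; simp; omega
          simp [h1, h2, this]
    · have e : (List.ofFn w).take (i+1) = (List.ofFn w).take i := by
        rw [List.take_of_length_le (by simp; omega), List.take_of_length_le (by simp; omega)]
      rw [e, ← ih]
      unfold psum
      apply Finset.sum_congr rfl
      intro j _
      have := j.2
      rw [if_pos (by omega), if_pos (by omega)]

lemma peak_eq {L : ℕ} (w : Fin L → Bool) (i : ℕ) :
    IsPeak w i ↔ ((List.ofFn w)[i]? = some true ∧ (List.ofFn w)[i+1]? = some false) := by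
  simp only [List.getElem?_eq_some_iff, IsPeak]
  constructor
  · rintro ⟨j, k, rfl, hk, h1, h2⟩
    refine ⟨⟨by simp, by simpa using h1⟩, ⟨by simp; omega, ?_⟩⟩
    simp only [← hk]; simpa using h2
  · rintro ⟨⟨a, b⟩, ⟨c, d⟩⟩
    simp only [List.length_ofFn] at a c
    exact ⟨⟨i, a⟩, ⟨i+1, c⟩, rfl, rfl, by simpa using b, by simpa using d⟩

def P (l : List Bool) : Prop := s l = 0 ∧ ∃ k v, 1 ≤ k ∧ l = List.replicate k true ++ false :: v ∧
  ∀ i, s (v.take i) ≤ 0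

def Q (l : List Bool) : Prop := s l = 0 ∧ ∀ i, 0 ≤ s (l.take i)

def Pk (l : List Bool) (i : ℕ) : Prop := l[i]? = some true ∧ l[i+1]? = some false

lemma decomp (l : List Bool) : (∃ k, l = List.replicate k true) ∨
    ∃ k v, l = List.replicate k true ++ false :: v := by
  induction l with
  | nil => exact Or.inl ⟨0, rfl⟩
  | cons a t ih =>
    cases a with
    | false => exact Or.inr ⟨0, t, rfl⟩
    | true =>
      rcases ih with ⟨k, rfl⟩ | ⟨k, v, rfl⟩
      · exact Or.inl ⟨k+1, rfl⟩
      · exact Or.inr ⟨k+1, v, rfl⟩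

lemma s_take_big (k : ℕ) (v : List Bool) (i : ℕ) :
    s ((List.replicate k true ++ false :: v).take (k + 1 + i)) = k - 1 + s (v.take i) := by
  have : k + 1 + i = k + (i+1) := by ring
  rw [this, List.take_append, s_append]
  simp [s_rep, s_cons, stepVal]
  ring

lemma s_take_small (k : ℕ) (v : List Bool) (i : ℕ) (h : i ≤ k) :
    s ((List.replicate k true ++ false :: v).take i) = i := by
  rw [List.take_append_of_le_length (by simpa using h), List.take_replicate, s_rep]
  simp [h]

lemma get_small (k : ℕ) (v : List Bool) (i : ℕ) (h : i < k) :
    (List.replicate k true ++ false :: v)[i]? = some true := by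
  rw [List.getElem?_append_left (by simpa using h)]; simp [h]

lemma get_k (k : ℕ) (v : List Bool) :
    (List.replicate k true ++ false :: v)[k]? = some false := by
  rw [List.getElem?_append_right (by simp)]; simp

lemma P_iff (l : List Bool) : P l ↔ (s l = 0 ∧ l[0]? = some true ∧ ∃ i, Pk l i ∧
    (∀ j, Pk l j → i ≤ j) ∧ ∀ j, Pk l j → j ≠ i → s (l.take (j+1)) < s (l.take (i+1))) := by
  constructor
  · rintro ⟨h0, k, v, hk, rfl, hv⟩
    obtain ⟨i, rfl⟩ : ∃ i, k = i + 1 := ⟨k-1, by omega⟩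
    have hlt : ∀ j, Pk (List.replicate (i+1) true ++ false :: v) j → i ≤ j := by
      intro j hj
      by_contra hlt
      have := hj.2
      rw [get_small _ _ _ (by omega)] at this
      simp at this
    refine ⟨h0, get_small _ _ _ (by omega), i, ⟨get_small _ _ _ (by omega), get_k _ _⟩, hlt, ?_⟩
    intro j hj hne
    have h1 := hlt j hj
    have h2 : j ≠ i + 1 := by
      rintro rfl
      have := hj.1
      rw [get_k] at this
      simp at this
    rw [s_take_small _ _ _ le_rfl]
    have h3 : j + 1 = i + 1 + 1 + (j - (i + 1)) := by omega
    rw [h3, s_take_big]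
    have := hv (j - (i+1))
    push_cast; linarith
  · rintro ⟨h0, ht, i, hi, hmin, hlow⟩
    rcases decomp l with ⟨k, rfl⟩ | ⟨k, v, rfl⟩
    · rw [s_rep] at h0
      have : k = 0 := by exact_mod_cast h0
      subst this; simp at ht
    have hk : 1 ≤ k := by
      by_contra hk
      have : k = 0 := by omega
      subst this; simp at ht
    have hik : i + 1 = k := by
      have h1 : i ≤ k - 1 := hmin (k-1) ⟨get_small _ _ _ (by omega), by
        rw [Nat.sub_add_cancel hk]; exact get_k _ _⟩
      by_contra hne
      have := hi.2
      rw [get_small _ _ _ (by omega)] at this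
      simp at this
    subst hik
    refine ⟨h0, i+1, v, hk, rfl, ?_⟩
    set l := List.replicate (i+1) true ++ false :: v with hl
    have hi1 : s (l.take (i+1)) = i + 1 := by
      rw [hl, s_take_small _ _ _ le_rfl]; push_cast; rfl
    have claim : ∀ d a, a + d = l.length → i + 1 ≤ a → l[a]? = some true →
        (i : ℤ) + 1 ≤ s (l.take (a+1)) → False := by
      intro d
      induction d with
      | zero =>
        intro a ha _ h1 _
        rw [List.getElem?_eq_none (by omega)] at h1
        simp at h1
      | succ d ih =>
        intro a ha hia h1 h2
        rcases hb : l[a+1]? with _ | b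
        · rw [List.getElem?_eq_none_iff] at hb
          rw [List.take_of_length_le hb, h0] at h2
          omega
        · cases b with
          | false =>
            have := hlow a ⟨h1, hb⟩ (by omega)
            omega
          | true =>
            apply ih (a+1) (by omega) (by omega) hb
            rw [s_take_succ _ _ _ hb]
            simp [stepVal]; omega
    intro j
    induction j with
    | zero => simp [s]
    | succ j ih =>
      have e1 := s_take_big (i+1) v j
      have e2 := s_take_big (i+1) v (j+1)
      rw [← hl] at e1 e2
      push_cast at e1 e2
      rcases hb : l[i+1+1+j]? with _ | b
      · rw [List.getElem?_eq_none_iff] at hb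
        rw [List.take_of_length_le (by omega)] at e1 e2
        omega
      · have e3 := s_take_succ _ _ _ hb
        rw [← add_assoc] at e2
        cases b with
        | false => simp [stepVal] at e3; omega
        | true =>
          by_contra hc
          have hlen := (List.getElem?_eq_some_iff.1 hb).1
          exact claim (l.length - (i+1+1+j)) (i+1+1+j) (by omega) (by omega) hb (by omega)

def phi : List Bool → List Bool
  | [] => []
  | true :: t => true :: phi t
  | false :: t => false :: t.reverse

lemma phi_phi (l : List Bool) : phi (phi l) = l := by
  induction l with
  | nil => rfl
  | cons a t ih => cases a <;> simp [phi, ih]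

lemma phi_len (l : List Bool) : (phi l).length = l.length := by
  induction l with
  | nil => rfl
  | cons a t ih => cases a <;> simp [phi, ih]

lemma phi_form (k : ℕ) (v : List Bool) : phi (List.replicate k true ++ false :: v) =
    List.replicate k true ++ false :: v.reverse := by
  induction k with
  | zero => rfl
  | succ k ih => simp [List.replicate_succ, phi, ih]

lemma rev_take (v : List Bool) (c : ℤ) : (∀ i, s (v.take i) ≤ c) ↔
    ∀ i, s v - c ≤ s (v.reverse.take i) := by
  have h : ∀ i, s (v.reverse.take i) = s v - s (v.take (v.length - i)) := by
    intro i
    rw [List.take_reverse, s_reverse]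
    have := s_append (v.take (v.length - i)) (v.drop (v.length - i))
    rw [List.take_append_drop] at this
    linarith
  constructor
  · intro H i
    rw [h]; linarith [H (v.length - i)]
  · intro H i
    by_cases hi : i ≤ v.length
    · have := H (v.length - i)
      rw [h, Nat.sub_sub_self hi] at this
      linarith
    · have := H 0
      rw [List.take_of_length_le (by omega)]
      simp [s_nil] at this
      exact this

lemma P_form (k : ℕ) (v : List Bool) : P (List.replicate k true ++ false :: v) ↔
    Q (List.replicate k true ++ false :: v.reverse) := by
  have hs : ∀ u, s (List.replicate k true ++ false :: u) = k - 1 + s u := by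
    intro u; rw [s_append, s_cons, s_rep]; simp [stepVal]; ring
  have hP : P (List.replicate k true ++ false :: v) ↔
      s (List.replicate k true ++ false :: v) = 0 ∧ 1 ≤ k ∧ ∀ i, s (v.take i) ≤ 0 := by
    constructor
    · rintro ⟨h0, k', v', hk', he, hv'⟩
      have hkk : k = k' := by
        rcases lt_trichotomy k k' with h | h | h
        · have h1 := get_k k v
          rw [he, get_small _ _ _ h] at h1; simp at h1
        · exact h
        · have h1 := get_k k' v'
          rw [← he, get_small _ _ _ h] at h1; simp at h1
      subst hkk
      have hvv : v = v' := by simpa using he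
      subst hvv
      exact ⟨h0, hk', hv'⟩
    · rintro ⟨h0, hk, hv⟩
      exact ⟨h0, k, v, hk, rfl, hv⟩
  rw [hP, Q, hs, hs, s_reverse, rev_take]
  constructor
  · rintro ⟨h0, hk, hv⟩
    refine ⟨h0, fun i => ?_⟩
    by_cases hi : i ≤ k
    · rw [s_take_small _ _ _ hi]; positivity
    · have h3 : i = k + 1 + (i - (k + 1)) := by omega
      rw [h3, s_take_big]
      linarith [hv (i - (k+1))]
  · rintro ⟨h0, hQ⟩
    refine ⟨h0, ?_, fun i => ?_⟩
    · have := hQ (k + 1 + 0)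
      rw [s_take_big] at this
      simp [s_nil] at this
      exact this
    · have := hQ (k + 1 + i)
      rw [s_take_big] at this
      linarith

lemma P_phi (l : List Bool) (hl : l ≠ []) : P l ↔ Q (phi l) := by
  rcases decomp l with ⟨k, rfl⟩ | ⟨k, v, rfl⟩
  · have hk : k ≠ 0 := by rintro rfl; simp at hl
    have e : phi (List.replicate k true) = List.replicate k true := by
      clear hl hk
      induction k with
      | zero => rfl
      | succ k ih => simp [List.replicate_succ, phi, ih]
    rw [e, P, Q, s_rep]
    constructor <;> rintro ⟨h, _⟩ <;> exact absurd (by exact_mod_cast h) hk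
  · rw [phi_form, P_form]

def toD : Bool → DyckStep
  | true => .U
  | false => .D

lemma toD_inj : Function.Injective toD := by
  intro a b; cases a <;> cases b <;> simp [toD]

def ofD : DyckStep → Bool
  | .U => true
  | .D => false

lemma toD_ofD (x : DyckStep) : toD (ofD x) = x := by cases x <;> rfl

lemma s_count (l : List Bool) :
    s l = ((l.map toD).count .U : ℤ) - (l.map toD).count .D := by
  induction l with
  | nil => rfl
  | cons a t ih =>
    rw [s_cons, ih]
    cases a <;> simp [toD, stepVal] <;> ring

lemma len_count (l : List DyckStep) : l.length = l.count .U + l.count .D := by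
  induction l with
  | nil => rfl
  | cons a t ih =>
    cases a <;> simp [ih] <;> ring

def toDyck (l : List Bool) (h : Q l) : DyckWord where
  toList := l.map toD
  count_U_eq_count_D := by
    have := h.1; rw [s_count] at this; omega
  count_D_le_count_U i := by
    have := h.2 i; rw [s_count, List.map_take] at this; omega

lemma cardQ (n : ℕ) : Nat.card {l : List Bool // l.length = 2 * n ∧ Q l} = catalan n := by
  rw [← DyckWord.card_dyckWord_semilength_eq_catalan, ← Nat.card_eq_fintype_card]
  have hlen : ∀ p : DyckWord, p.toList.length = 2 * p.semilength := by
    intro p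
    have := p.count_U_eq_count_D
    rw [len_count, DyckWord.semilength]; omega
  refine Nat.card_eq_of_bijective (fun l => ⟨toDyck l.1 l.2.2, ?_⟩) ⟨?_, ?_⟩
  · have h1 := hlen (toDyck l.1 l.2.2)
    have h2 : (toDyck l.1 l.2.2).toList.length = 2 * n := by simp [toDyck, l.2.1]
    omega
  · rintro ⟨l, h⟩ ⟨l', h'⟩ he
    simp only [Subtype.mk.injEq, toDyck, DyckWord.mk.injEq] at he
    exact Subtype.ext (List.map_injective_iff.2 toD_inj he)
  · rintro ⟨p, hp⟩
    have hm : (p.toList.map ofD).map toD = p.toList := by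
      simp [toD_ofD, Function.comp_def]
    refine ⟨⟨p.toList.map ofD, ?_, ?_, ?_⟩, ?_⟩
    · rw [List.length_map, hlen, hp]
    · rw [s_count, hm, p.count_U_eq_count_D]; simp
    · intro i
      have := p.count_D_le_count_U i
      rw [s_count, List.map_take, hm]; omega
    · apply Subtype.ext
      apply DyckWord.ext
      exact hm

lemma cardP (n : ℕ) (hn : 1 ≤ n) : Nat.card {l : List Bool // l.length = 2 * n ∧ P l} =
    Nat.card {l : List Bool // l.length = 2 * n ∧ Q l} := by
  apply Nat.card_congr
  refine Equiv.subtypeEquiv ⟨phi, phi, phi_phi, phi_phi⟩ ?_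
  intro l
  simp only [Equiv.coe_fn_mk, phi_len]
  refine and_congr_right fun h => P_phi l ?_
  rintro rfl
  simp at h; omega

end S19

theorem stmt_19 (n : ℕ) (hn : 1 ≤ n) :
    Nat.card {w : Fin (2 * n) → Bool // IsBridge w ∧
        (∃ j : Fin (2 * n), (j : ℕ) = 0 ∧ w j = true) ∧
        ∃ i : ℕ, IsPeak w i ∧ (∀ j : ℕ, IsPeak w j → i ≤ j) ∧
          ∀ j : ℕ, IsPeak w j → j ≠ i → peakHeight w j < peakHeight w i} =
      Nat.choose (2 * n) n / (n + 1) := by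
  have hc := catalan_eq_centralBinom_div n
  rw [Nat.centralBinom] at hc
  rw [← hc, ← S19.cardQ, ← S19.cardP n hn]
  have key : ∀ w : Fin (2 * n) → Bool, (IsBridge w ∧
        (∃ j : Fin (2 * n), (j : ℕ) = 0 ∧ w j = true) ∧
        ∃ i : ℕ, IsPeak w i ∧ (∀ j : ℕ, IsPeak w j → i ≤ j) ∧
          ∀ j : ℕ, IsPeak w j → j ≠ i → peakHeight w j < peakHeight w i) ↔
      S19.P (List.ofFn w) := by
    intro w
    rw [S19.P_iff]
    simp only [IsBridge, peakHeight, S19.psum_eq, S19.peak_eq, S19.Pk]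
    rw [List.take_of_length_le (by simp)]
    refine and_congr_right fun _ => and_congr_left fun _ => ?_
    rw [List.getElem?_eq_some_iff]
    constructor
    · rintro ⟨j, hj, hw⟩
      refine ⟨by simp; omega, ?_⟩
      simp only [← hj]; simpa using hw
    · rintro ⟨a, b⟩
      exact ⟨⟨0, by omega⟩, rfl, by simpa using b⟩
  refine Nat.card_eq_of_bijective (fun w => ⟨List.ofFn w.1, by simp, (key _).1 w.2⟩) ⟨?_, ?_⟩
  · rintro ⟨w, h⟩ ⟨w', h'⟩ he
    simp only [Subtype.mk.injEq] at he
    exact Subtype.ext (List.ofFn_injective he)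
  · rintro ⟨l, hl, hP⟩
    have e : List.ofFn (fun j : Fin (2 * n) => l[(j : ℕ)]'(by omega)) = l := by
      apply List.ext_getElem
      · simp [hl]
      · intro i h1 h2; simp
    refine ⟨⟨fun j => l[(j : ℕ)]'(by omega), (key _).2 (by rw [e]; exact hP)⟩, ?_⟩
    exact Subtype.ext e
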